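/- Let G=(V,E) be a finite multigraph and C a family of pairwise disjoint subset conflicts, each of size at least 1. Construct G' and a family C' of exact conflict pairs as follows: independently for each conflict ({e_1,...,e_k}, v) in C, detach each edge e_i from the endpoint v and attach the freed end to a new vertex u_i; add new vertices u_0 and w and new edges u_0u_1, ..., u_0u_k, an edge from u_0 to v, and an edge u_0w; if k is odd, additionally subdivide the edge from u_0 to v by a new vertex v'; finally, letting f denote the edge incident to u_0 on the path from u_0 towards v, place the exact conflict pair ({f, u_0w}, u_0) into C'. Then G has an even orientation that violates no subset conflict of C if and only if G' has an even orientation that violates no exact conflict pair of C'. -/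

import Mathlib

open scoped Classical

noncomputable section

/-- The indegree of vertex `v` under the head-assignment `o`. -/
def indeg {V E : Type*} (o : E → V) (v : V) : ℕ := Nat.card {e // o e = v}

/-- `o` is an orientation of the multigraph with incidence map `ends`:
every edge is directed towards one of its two endpoints (its head). -/
def IsOrient {V E : Type*} (ends : E → V × V) (o : E → V) : Prop :=
  ∀ e, o e = (ends e).1 ∨ o e = (ends e).2

/-- Edge `e` is incident to vertex `v`. -/
def Inc {V E : Type*} (ends : E → V × V) (e : E) (v : V) : Prop :=
  (ends e).1 = v ∨ (ends e).2 = v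

section Construction

variable {V E ι : Type*}

/-- The size `k` of the `i`-th subset conflict. -/
def ksz8 (conf : ι → Set E × V) (i : ι) : ℕ := Nat.card {e : E // e ∈ (conf i).1}

/-- Vertices of `G'`: the original vertices; for each conflict `i` the vertices `u_e`
(one per conflict edge `e`, encoded as `some e`) and `u_0` (encoded as `none`);
the vertices `w`; and, for conflicts of odd size, the subdivision vertices `v'`. -/
def V8 (conf : ι → Set E × V) : Type _ :=
  V ⊕ (Σ i : ι, Option {e : E // e ∈ (conf i).1}) ⊕ ι ⊕ {i : ι // Odd (ksz8 conf i)}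

/-- Edges of `G'`: the original edges (reattached); the edges `u_0 u_e`; the edge `f` at
`u_0` towards `v` (going to `v'` if the size is odd, directly to `v` otherwise); the edges
`v' v` for odd size; and the edges `u_0 w`. -/
def E8 (conf : ι → Set E × V) : Type _ :=
  E ⊕ (Σ i : ι, {e : E // e ∈ (conf i).1}) ⊕ ι ⊕ {i : ι // Odd (ksz8 conf i)} ⊕ ι

/-- Reattachment of an endpoint `v` of an original edge `e`: if `e` belongs to a conflict
at `v`, the endpoint is detached from `v` and moved to the new vertex `u_e` of that
conflict; otherwise it stays at `v`. -/
def attach8 (conf : ι → Set E × V) (e : E) (v : V) : V8 conf :=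
  if h : ∃ i : ι, e ∈ (conf i).1 ∧ (conf i).2 = v then
    Sum.inr (Sum.inl ⟨h.choose, some ⟨e, h.choose_spec.1⟩⟩)
  else Sum.inl v

/-- The incidence map of `G'`. -/
def ends8 (ends : E → V × V) (conf : ι → Set E × V) :
    E8 conf → V8 conf × V8 conf
  | Sum.inl e => (attach8 conf e (ends e).1, attach8 conf e (ends e).2)
  | Sum.inr (Sum.inl q) =>
      (Sum.inr (Sum.inl ⟨q.1, none⟩), Sum.inr (Sum.inl ⟨q.1, some q.2⟩))
  | Sum.inr (Sum.inr (Sum.inl i)) =>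
      (Sum.inr (Sum.inl ⟨i, none⟩),
        if h : Odd (ksz8 conf i) then Sum.inr (Sum.inr (Sum.inr ⟨i, h⟩))
        else Sum.inl (conf i).2)
  | Sum.inr (Sum.inr (Sum.inr (Sum.inl q))) =>
      (Sum.inr (Sum.inr (Sum.inr q)), Sum.inl (conf q.1).2)
  | Sum.inr (Sum.inr (Sum.inr (Sum.inr i))) =>
      (Sum.inr (Sum.inl ⟨i, none⟩), Sum.inr (Sum.inr (Sum.inl i)))

/-- The family `C'` of exact conflict pairs of `G'`: for each conflict `i`, the pair
`({f, u_0 w}, u_0)`. -/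
def C8 (conf : ι → Set E × V) : Set (Set (E8 conf) × V8 conf) :=
  {c | ∃ i : ι,
    c = (({Sum.inr (Sum.inr (Sum.inl i)),
           Sum.inr (Sum.inr (Sum.inr (Sum.inr i)))} : Set (E8 conf)),
         Sum.inr (Sum.inl ⟨i, none⟩))}

end Construction

/-!
Contracting every gadget of `G'` to the vertex of its conflict turns an orientation of `G'` into one
of `G` together with loops, and each gadget contributes an even number of loops. So if all new
vertices of `G'` have even indegree, the parities at the old vertices agree in `G` and `G'`.
Evenness at `w` forces `u_0 w` towards `u_0`, and evenness at `u_e` forces `u_0 u_e` towards `u_0`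
exactly when `e` is directed away from `v` in `G`. Since the indegree of `u_0` is even as well, its
incoming edges are exactly `f` and `u_0 w` if and only if the conflict is violated in `G`.
Conversely, every orientation of `G` extends to `G'` with all new vertices even.
-/

section Indegree

variable {V W E F : Type*}

theorem indeg_eq_ncard (o : E → V) (v : V) : indeg o v = {e | o e = v}.ncard := rfl

theorem indeg_sumElim [Finite E] [Finite F] (o₁ : E → V) (o₂ : F → V) (v : V) :
    indeg (Sum.elim o₁ o₂) v = indeg o₁ v + indeg o₂ v := by
  unfold indeg
  rw [← Nat.card_sum]
  exact Nat.card_congr Equiv.subtypeSum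

theorem indeg_id (v : V) : indeg id v = 1 := by
  simp [indeg_eq_ncard]

theorem indeg_sigma_fst {β : V → Type*} (v : V) :
    indeg (Sigma.fst : Sigma β → V) v = Nat.card (β v) :=
  Nat.card_congr (Equiv.sigmaSubtype v)

theorem indeg_subtype_val (p : V → Prop) (v : V) :
    indeg (Subtype.val : {v // p v} → V) v = if p v then 1 else 0 := by
  have hfib : {u : {v // p v} | u.1 = v} = Subtype.val ⁻¹' {v} := rfl
  rw [indeg_eq_ncard, hfib]
  split_ifs with hv
  · rw [Set.ncard_eq_one]
    exact ⟨⟨v, hv⟩, by ext; simp [Subtype.ext_iff]⟩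
  · rw [Set.preimage_eq_empty, Set.ncard_empty]
    simpa using hv

theorem indeg_comp [Fintype E] (f : V → W) (o : E → V) (w : W) :
    indeg (f ∘ o) w = ∑ v ∈ Finset.univ.image o with f v = w, indeg o v := by
  simp only [indeg, Nat.card_eq_fintype_card, Fintype.card_subtype]
  rw [Finset.card_eq_sum_card_fiberwise (f := o)
    (t := (Finset.univ.image o).filter (f · = w)) (by intro; simp)]
  refine Finset.sum_congr rfl fun v hv => ?_
  rw [Finset.filter_filter]
  congr 1
  ext e
  grind

theorem even_indeg_comp [Finite E] {f : V → W} {o : E → V} {w : W}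
    (h : ∀ v, f v = w → Even (indeg o v)) : Even (indeg (f ∘ o) w) := by
  have := Fintype.ofFinite E
  rw [indeg_comp]
  exact Finset.even_sum _ fun v hv => h v (Finset.mem_filter.1 hv).2

theorem even_indeg_iff_of_forall_eq {o : E → V} {v : V} {a : E} (h : ∀ e, o e = v → e = a) :
    Even (indeg o v) ↔ o a ≠ v := by
  by_cases ha : o a = v
  · have : {e | o e = v} = {a} := by ext; grind
    simp [indeg_eq_ncard, this, ha]
  · have : {e | o e = v} = ∅ := by ext; grind
    simp [indeg_eq_ncard, this, ha]

theorem even_indeg_iff_of_forall_eq_or {o : E → V} {v : V} {a b : E} (hab : a ≠ b)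
    (h : ∀ e, o e = v → e = a ∨ e = b) : Even (indeg o v) ↔ (o a = v ↔ o b = v) := by
  by_cases ha : o a = v
  · by_cases hb : o b = v
    · have : {e | o e = v} = {a, b} := by ext; grind
      simp [indeg_eq_ncard, this, ha, hb, Set.ncard_pair hab]
    · have : {e | o e = v} = {a} := by ext; grind
      simp [indeg_eq_ncard, this, ha, hb]
  · rw [even_indeg_iff_of_forall_eq (a := b) (by grind)]
    simp [ha]

theorem even_indeg_comp_iff [Finite E] {f : V → W} {o : E → V} {v : V}
    (h : ∀ u ≠ v, f u = f v → Even (indeg o u)) :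
    Even (indeg (f ∘ o) (f v)) ↔ Even (indeg o v) := by
  have := Fintype.ofFinite E
  have hrest : Even (∑ u ∈ ((Finset.univ.image o).filter (f · = f v)).erase v, indeg o u) :=
    Finset.even_sum _ fun u hu => by
      rw [Finset.mem_erase, Finset.mem_filter] at hu
      exact h u hu.1 hu.2.2
  rw [indeg_comp]
  by_cases hv : v ∈ (Finset.univ.image o).filter (f · = f v)
  · rw [← Finset.add_sum_erase _ _ hv, Nat.even_add, iff_true_right hrest]
  · rw [Finset.erase_eq_of_notMem hv] at hrest
    have hempty : {e | o e = v} = ∅ := by ext; grind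
    have hzero : indeg o v = 0 := by rw [indeg_eq_ncard, hempty, Set.ncard_empty]
    exact iff_of_true hrest (hzero ▸ Even.zero)

theorem IsOrient.inc {ends : E → V × V} {o : E → V} (ho : IsOrient ends o) {e : E} {v : V}
    (h : o e = v) : Inc ends e v :=
  h ▸ (ho e).imp Eq.symm Eq.symm

end Indegree

section Gadget

variable {V E ι : Type*} {ends : E → V × V} {conf : ι → Set E × V} {o : E → V}
  {o' : E8 conf → V8 conf}

/-- Pairwise disjointness of a family of conflicts. -/
def DisjointConflicts (conf : ι → Set E × V) : Prop :=
  ∀ i j, i ≠ j → (conf i).2 = (conf j).2 → Disjoint (conf i).1 (conf j).1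

/-- The vertex `u_0` of the `i`-th gadget. -/
abbrev V8.hub (i : ι) : V8 conf := .inr (.inl ⟨i, none⟩)

/-- The vertex `u_e` of the `i`-th gadget. -/
abbrev V8.port (i : ι) (e : {e // e ∈ (conf i).1}) : V8 conf := .inr (.inl ⟨i, some e⟩)

/-- The vertex `w` of the `i`-th gadget. -/
abbrev V8.leaf (i : ι) : V8 conf := .inr (.inr (.inl i))

/-- The vertex `v'` of a gadget of odd size. -/
abbrev V8.mid (q : {i // Odd (ksz8 conf i)}) : V8 conf := .inr (.inr (.inr q))

/-- The edge `u_0 u_e` of the `i`-th gadget. -/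
abbrev E8.spoke (i : ι) (e : {e // e ∈ (conf i).1}) : E8 conf := .inr (.inl ⟨i, e⟩)

/-- The edge `f` of the `i`-th gadget. -/
abbrev E8.stem (i : ι) : E8 conf := .inr (.inr (.inl i))

/-- The edge `v' v` of a gadget of odd size. -/
abbrev E8.tail (q : {i // Odd (ksz8 conf i)}) : E8 conf := .inr (.inr (.inr (.inl q)))

/-- The edge `u_0 w` of the `i`-th gadget. -/
abbrev E8.pendant (i : ι) : E8 conf := .inr (.inr (.inr (.inr i)))

theorem attach8_eq_inl_or_port (e : E) (v : V) :
    attach8 conf e v = .inl v ∨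
      ∃ i, ∃ he : e ∈ (conf i).1, (conf i).2 = v ∧ attach8 conf e v = .port i ⟨e, he⟩ := by
  by_cases h : ∃ i, e ∈ (conf i).1 ∧ (conf i).2 = v
  · exact .inr ⟨h.choose, h.choose_spec.1, h.choose_spec.2, dif_pos h⟩
  · exact .inl (dif_neg h)

theorem attach8_eq_port_iff (hdisj : DisjointConflicts conf) {i : ι}
    {e : {e // e ∈ (conf i).1}} {v : V} :
    attach8 conf e v = .port i e ↔ v = (conf i).2 := by
  constructor
  · rcases attach8_eq_inl_or_port (conf := conf) e v with h | ⟨j, he, hj, h⟩ <;> grind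
  · rintro rfl
    have h : ∃ j, e.1 ∈ (conf j).1 ∧ (conf j).2 = (conf i).2 := ⟨i, e.2, rfl⟩
    have hi : h.choose = i := by
      by_contra hne
      exact Set.disjoint_left.1 (hdisj _ _ hne h.choose_spec.2) h.choose_spec.1 e.2
    exact (dif_pos h).trans (by grind)

theorem eq_pendant_of_inc_leaf {x : E8 conf} {i : ι} (hx : Inc (ends8 ends conf) x (.leaf i)) :
    x = .pendant i := by
  rcases x with e | ⟨j, e⟩ | j | q | j <;> grind [Inc, ends8, attach8_eq_inl_or_port]

theorem eq_stem_or_eq_tail_of_inc_mid {x : E8 conf} {q : {i // Odd (ksz8 conf i)}}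
    (hx : Inc (ends8 ends conf) x (.mid q)) : x = .stem q.1 ∨ x = .tail q := by
  rcases x with e | ⟨j, e⟩ | j | q | j <;> grind [Inc, ends8, attach8_eq_inl_or_port]

theorem eq_inl_or_eq_spoke_of_inc_port {x : E8 conf} {i : ι} {e : {e // e ∈ (conf i).1}}
    (hx : Inc (ends8 ends conf) x (.port i e)) : x = .inl e.1 ∨ x = .spoke i e := by
  rcases x with e | ⟨j, e⟩ | j | q | j <;> grind [Inc, ends8, attach8_eq_inl_or_port]

theorem eq_spoke_or_eq_stem_or_eq_pendant_of_inc_hub {x : E8 conf} {i : ι}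
    (hx : Inc (ends8 ends conf) x (.hub i)) :
    (∃ e, x = .spoke i e) ∨ x = .stem i ∨ x = .pendant i := by
  rcases x with e | ⟨j, e⟩ | j | q | j <;> grind [Inc, ends8, attach8_eq_inl_or_port]

/-- The vertex map `G' → G` contracting every gadget to the vertex of its conflict. -/
def V8.contract (conf : ι → Set E × V) : V8 conf → V
  | .inl v => v
  | .inr (.inl q) => (conf q.1).2
  | .inr (.inr (.inl i)) => (conf i).2
  | .inr (.inr (.inr q)) => (conf q.1).2

/-- The gadget that a new edge of `G'` belongs to. -/
def E8.gadgetIndex (conf : ι → Set E × V) :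
    (Σ i, {e // e ∈ (conf i).1}) ⊕ ι ⊕ {i // Odd (ksz8 conf i)} ⊕ ι → ι :=
  Sum.elim Sigma.fst (Sum.elim id (Sum.elim Subtype.val id))

theorem contract_attach8 (e : E) (v : V) : V8.contract conf (attach8 conf e v) = v := by
  rcases attach8_eq_inl_or_port (conf := conf) e v with h | ⟨i, he, hi, h⟩ <;> rw [h]
  · rfl
  · exact hi

/-- The orientation of `G` obtained from one of `G'` by contracting all gadgets. -/
def contractOrient (o' : E8 conf → V8 conf) (e : E) : V := V8.contract conf (o' (.inl e))

theorem isOrient_contractOrient (ho' : IsOrient (ends8 ends conf) o') :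
    IsOrient ends (contractOrient o') := fun e =>
  (ho' (.inl e)).imp (fun h => (congrArg (V8.contract conf) h).trans (contract_attach8 _ _))
    (fun h => (congrArg (V8.contract conf) h).trans (contract_attach8 _ _))

theorem IsOrient.apply_inl (ho' : IsOrient (ends8 ends conf) o') (e : E) :
    o' (.inl e) = attach8 conf e (contractOrient o' e) := by
  obtain ⟨v, hv⟩ : ∃ v, o' (.inl e) = attach8 conf e v := (ho' (.inl e)).elim (⟨_, ·⟩) (⟨_, ·⟩)
  rw [contractOrient, hv, contract_attach8]

theorem contract_ends8_inr (d) :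
    V8.contract conf (ends8 ends conf (.inr d)).1 = (conf (E8.gadgetIndex conf d)).2 ∧
      V8.contract conf (ends8 ends conf (.inr d)).2 = (conf (E8.gadgetIndex conf d)).2 := by
  rcases d with ⟨i, e⟩ | i | q | i
  · exact ⟨rfl, rfl⟩
  · refine ⟨rfl, ?_⟩
    by_cases h : Odd (ksz8 conf i)
    · exact congrArg (V8.contract conf) (dif_pos h)
    · exact congrArg (V8.contract conf) (dif_neg h)
  · exact ⟨rfl, rfl⟩
  · exact ⟨rfl, rfl⟩

theorem IsOrient.contract_comp (ho' : IsOrient (ends8 ends conf) o') :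
    V8.contract conf ∘ o' =
      Sum.elim (contractOrient o') ((fun i => (conf i).2) ∘ E8.gadgetIndex conf) := by
  funext x
  rcases x with e | d
  · rfl
  · rcases ho' (.inr d) with h | h
    · exact (congrArg (V8.contract conf) h).trans (contract_ends8_inr d).1
    · exact (congrArg (V8.contract conf) h).trans (contract_ends8_inr d).2

-- A gadget of size `k` has `k + 2` edges, plus one when `k` is odd.
theorem even_indeg_gadgetIndex [Finite E] [Finite ι] (i : ι) :
    Even (indeg (E8.gadgetIndex conf) i) := by
  simp only [E8.gadgetIndex, indeg_sumElim, indeg_sigma_fst, indeg_id, indeg_subtype_val]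
  change Even (ksz8 conf i + _)
  split_ifs <;> grind

theorem even_indeg_contractOrient_iff [Finite E] [Finite ι] (ho' : IsOrient (ends8 ends conf) o')
    (hnew : ∀ y, Even (indeg o' (.inr y))) (v : V) :
    Even (indeg (contractOrient o') v) ↔ Even (indeg o' (.inl v)) := by
  have : Finite (E8 conf) := inferInstanceAs (Finite (_ ⊕ _))
  have hgadgets : Even (indeg ((fun i => (conf i).2) ∘ E8.gadgetIndex conf) v) :=
    even_indeg_comp fun i _ => even_indeg_gadgetIndex i
  calc Even (indeg (contractOrient o') v)
      ↔ Even (indeg (V8.contract conf ∘ o') v) := by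
        rw [ho'.contract_comp]
        change _ ↔ Even (indeg (E := E ⊕ _) _ v)
        rw [indeg_sumElim, Nat.even_add, iff_true_right hgadgets]
    _ ↔ Even (indeg o' (.inl v)) := by
        refine even_indeg_comp_iff (f := V8.contract conf) (v := Sum.inl v) ?_
        rintro (u | y) hne h
        · exact absurd (congrArg Sum.inl h) hne
        · exact hnew y

theorem even_indeg_leaf_iff (ho' : IsOrient (ends8 ends conf) o') (i : ι) :
    Even (indeg o' (.leaf i)) ↔ o' (.pendant i) = .hub i := by
  rw [even_indeg_iff_of_forall_eq fun x hx => eq_pendant_of_inc_leaf (ho'.inc hx)]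
  rcases ho' (.pendant i) with h | h <;> rw [h] <;> grind [ends8]

theorem even_indeg_port_iff (hdisj : DisjointConflicts conf) (ho' : IsOrient (ends8 ends conf) o')
    (i : ι) (e : {e // e ∈ (conf i).1}) :
    Even (indeg o' (.port i e)) ↔
      (o' (.spoke i e) = .hub i ↔ contractOrient o' e ≠ (conf i).2) := by
  rw [even_indeg_iff_of_forall_eq_or (a := .inl e.1) (b := E8.spoke i e) nofun
    fun x hx => eq_inl_or_eq_spoke_of_inc_port (ho'.inc hx), ho'.apply_inl,
    attach8_eq_port_iff hdisj]
  rcases ho' (.spoke i e) with h | h <;> rw [h] <;> grind [ends8]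

theorem heads_hub_eq_iff (hdisj : DisjointConflicts conf) (ho' : IsOrient (ends8 ends conf) o')
    (hnew : ∀ y, Even (indeg o' (.inr y))) (i : ι) :
    {x | o' x = .hub i} = {.stem i, .pendant i} ↔
      ∀ e ∈ (conf i).1, contractOrient o' e = (conf i).2 := by
  have hpendant : o' (.pendant i) = .hub i := (even_indeg_leaf_iff ho' i).1 (hnew _)
  have hspoke (e) : o' (.spoke i e) = .hub i ↔ contractOrient o' e ≠ (conf i).2 :=
    (even_indeg_port_iff hdisj ho' i e).1 (hnew _)
  constructor
  · intro h e he
    by_contra hne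
    have : E8.spoke i ⟨e, he⟩ ∈ ({.stem i, .pendant i} : Set (E8 conf)) :=
      h ▸ (hspoke ⟨e, he⟩).2 hne
    rcases this with h | h <;> cases h
  · intro h
    have hheads (x) (hx : o' x = .hub i) : x = .stem i ∨ x = .pendant i :=
      (eq_spoke_or_eq_stem_or_eq_pendant_of_inc_hub (ho'.inc hx)).resolve_left <| by
        rintro ⟨e, rfl⟩
        exact (hspoke e).1 hx (h e e.2)
    have hstem : o' (.stem i) = .hub i :=
      ((even_indeg_iff_of_forall_eq_or (by nofun) hheads).1 (hnew _)).2 hpendant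
    exact Set.Subset.antisymm hheads (by rintro x (rfl | rfl); exacts [hstem, hpendant])

/-- The number of edges of the `i`-th conflict that `o` directs away from its vertex. -/
def awayCount (conf : ι → Set E × V) (o : E → V) (i : ι) : ℕ :=
  {e : {e // e ∈ (conf i).1} | o e ≠ (conf i).2}.ncard

/-- The extension of an orientation `o` of `G` to `G'` that makes every new vertex even. -/
def liftOrient (conf : ι → Set E × V) (o : E → V) : E8 conf → V8 conf
  | .inl e => attach8 conf e (o e)
  | .inr (.inl ⟨i, e⟩) => if o e = (conf i).2 then .port i e else .hub i
  | .inr (.inr (.inl i)) =>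
      if Even (awayCount conf o i) then .hub i
      else if h : Odd (ksz8 conf i) then .mid ⟨i, h⟩ else .inl (conf i).2
  | .inr (.inr (.inr (.inl q))) =>
      if Even (awayCount conf o q) then .inl (conf q.1).2 else .mid q
  | .inr (.inr (.inr (.inr i))) => .hub i

theorem isOrient_liftOrient (ho : IsOrient ends o) :
    IsOrient (ends8 ends conf) (liftOrient conf o) := by
  rintro (e | ⟨i, e⟩ | i | q | i)
  · exact (ho e).imp (congrArg (attach8 conf e)) (congrArg (attach8 conf e))
  all_goals grind [liftOrient, ends8]

theorem contractOrient_liftOrient : contractOrient (liftOrient conf o) = o :=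
  funext fun _ => contract_attach8 _ _

theorem even_indeg_liftOrient_mid (ho : IsOrient ends o) (q : {i // Odd (ksz8 conf i)}) :
    Even (indeg (liftOrient conf o) (.mid q)) := by
  rw [even_indeg_iff_of_forall_eq_or (a := E8.stem q.1) (b := E8.tail q) (by nofun)
    fun x hx => eq_stem_or_eq_tail_of_inc_mid ((isOrient_liftOrient ho).inc hx)]
  grind [liftOrient]

theorem liftOrient_eq_hub_iff {x : E8 conf} {i : ι} :
    liftOrient conf o x = .hub i ↔
      x = .stem i ∧ Even (awayCount conf o i) ∨ x = .pendant i ∨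
        ∃ e : {e // e ∈ (conf i).1}, o e ≠ (conf i).2 ∧ .spoke i e = x := by
  rcases x with e | ⟨j, e⟩ | j | q | j <;> grind [liftOrient, attach8_eq_inl_or_port]

theorem even_indeg_liftOrient_hub [Finite E] (i : ι) :
    Even (indeg (liftOrient conf o) (.hub i)) := by
  set A : Set (E8 conf) := insert (.pendant i) (E8.spoke i '' {e | o e ≠ (conf i).2}) with hA
  have hAcard : A.ncard = awayCount conf o i + 1 := by
    rw [hA, Set.ncard_insert_of_notMem (by rintro ⟨_, _, ⟨⟩⟩),
      Set.ncard_image_of_injective _ (by rintro _ _ ⟨⟩; rfl), awayCount]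
  have hstem : E8.stem i ∉ A := by rintro (⟨⟨⟩⟩ | ⟨_, _, ⟨⟩⟩)
  have hheads (x) :
      liftOrient conf o x = .hub i ↔ x = .stem i ∧ Even (awayCount conf o i) ∨ x ∈ A :=
    liftOrient_eq_hub_iff
  rw [indeg_eq_ncard]
  by_cases h : Even (awayCount conf o i)
  · have : {x | liftOrient conf o x = .hub i} = insert (.stem i) A := by ext x; grind
    rw [this, Set.ncard_insert_of_notMem hstem, hAcard]
    grind
  · have : {x | liftOrient conf o x = .hub i} = A := by ext x; grind
    rw [this, hAcard]
    grind

theorem even_indeg_liftOrient_inr [Finite E] (hdisj : DisjointConflicts conf)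
    (ho : IsOrient ends o) (y) : Even (indeg (liftOrient conf o) (.inr y)) := by
  rcases y with ⟨i, _ | e⟩ | i | q
  · exact even_indeg_liftOrient_hub i
  · rw [even_indeg_port_iff hdisj (isOrient_liftOrient ho), contractOrient_liftOrient]
    grind [liftOrient]
  · exact (even_indeg_leaf_iff (isOrient_liftOrient ho) i).2 rfl
  · exact even_indeg_liftOrient_mid ho q

end Gadget

theorem stmt_8_general {V E ι : Type*} [Finite E] [Finite ι]
    (ends : E → V × V) (conf : ι → Set E × V) (hdisj : DisjointConflicts conf) :
    (∃ o : E → V, IsOrient ends o ∧ (∀ v, Even (indeg o v)) ∧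
        ∀ i : ι, ¬ ∀ e ∈ (conf i).1, o e = (conf i).2) ↔
    (∃ o' : E8 conf → V8 conf, IsOrient (ends8 ends conf) o' ∧
        (∀ x, Even (indeg o' x)) ∧
        ∀ c ∈ C8 conf, {e | o' e = c.2} ≠ c.1) := by
  constructor
  · rintro ⟨o, ho, heven, hviol⟩
    have hnew := even_indeg_liftOrient_inr hdisj ho
    have hlift := isOrient_liftOrient (conf := conf) ho
    refine ⟨liftOrient conf o, hlift, ?_, ?_⟩
    · rintro (v | y)
      · rw [← even_indeg_contractOrient_iff hlift hnew, contractOrient_liftOrient]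
        exact heven v
      · exact hnew y
    · rintro _ ⟨i, rfl⟩ hpair
      have hviolated := (heads_hub_eq_iff hdisj hlift hnew i).1 hpair
      rw [contractOrient_liftOrient] at hviolated
      exact hviol i hviolated
  · rintro ⟨o', ho', heven, hviol⟩
    have hnew := fun y => heven (.inr y)
    exact ⟨contractOrient o', isOrient_contractOrient ho',
      fun v => (even_indeg_contractOrient_iff ho' hnew v).2 (heven _),
      fun i h => hviol _ ⟨i, rfl⟩ ((heads_hub_eq_iff hdisj ho' hnew i).2 h)⟩

/-- for pairwise disjoint subset conflicts (each of size at least one),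
`G` has an even orientation violating no subset conflict of `C` iff the modified graph
`G'` has an even orientation violating no exact conflict pair of `C'`. -/
theorem stmt_8 {V E ι : Type*} [Finite V] [Finite E] [Finite ι]
    (ends : E → V × V) (hloop : ∀ e, (ends e).1 ≠ (ends e).2)
    (conf : ι → Set E × V)
    (hsize : ∀ i, 1 ≤ ksz8 conf i)
    (hinc : ∀ i, ∀ e ∈ (conf i).1, Inc ends e (conf i).2)
    (hdisj : ∀ i j, i ≠ j → (conf i).2 = (conf j).2 → Disjoint (conf i).1 (conf j).1) :
    (∃ o : E → V, IsOrient ends o ∧ (∀ v, Even (indeg o v)) ∧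
        ∀ i : ι, ¬ ∀ e ∈ (conf i).1, o e = (conf i).2) ↔
    (∃ o' : E8 conf → V8 conf, IsOrient (ends8 ends conf) o' ∧
        (∀ x, Even (indeg o' x)) ∧
        ∀ c ∈ C8 conf, {e | o' e = c.2} ≠ c.1) :=
  stmt_8_general ends conf hdisj
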